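/- Let Λ_c(α) = sup_{a ∈ (0, π)} 8 e^{-(2a/α) tan(a/2)} sin²(a/2) for α > 0. Then Λ_c(α) < 8 for every α > 0, and Λ_c(α) → 8 as α → ∞. -/

import Mathlib

/-!
With `s = sin² (a/2)`, the inequality `sin² t ≤ t tan t` bounds the function under the supremum by
`8 s exp (-4s/α)`, and `exp x ≥ 1 + x` together with `s ≤ 1` bounds this by `8 / (1 + 4/α)`. Hence
`Λ_c(α) ≤ 8 / (1 + 4/α) < 8`. Conversely `Λ_c(α)` dominates its value at any fixed `a`, which tends
to `8 sin² (a/2)` as `α → ∞`; this limit is as close to `8` as we like when `a` is close to `π`.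
-/

open Real Set Filter

/-- The critical heating parameter Λ_c(α) for the voltage-controlled axial problem. -/
noncomputable def LambdaCrit (α : ℝ) : ℝ :=
  sSup ((fun a : ℝ => 8 * Real.exp (-(2 * a / α) * Real.tan (a / 2)) *
    Real.sin (a / 2) ^ 2) '' Set.Ioo 0 Real.pi)

open scoped Topology

/-- The function of `a` whose supremum over `(0, π)` is `LambdaCrit α`. -/
noncomputable def heatingProfile (α a : ℝ) : ℝ :=
  8 * exp (-(2 * a / α) * tan (a / 2)) * sin (a / 2) ^ 2

lemma sin_sq_le_mul_tan {t : ℝ} (ht₀ : 0 ≤ t) (ht : t < π / 2) : sin t ^ 2 ≤ t * tan t :=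
  calc
    sin t ^ 2 ≤ t ^ 2 := sin_sq_le_sq
    _ = t * t := sq t
    _ ≤ t * tan t := mul_le_mul_of_nonneg_left (le_tan ht₀ ht) ht₀

lemma exp_neg_mul_mul_le_inv {c s : ℝ} (hc : -1 < c) (hs : s ≤ 1) :
    exp (-(c * s)) * s ≤ (1 + c)⁻¹ := by
  have hs_exp : s * (1 + c) ≤ exp (c * s) := by linarith [add_one_le_exp (c * s)]
  rw [exp_neg, inv_mul_le_iff₀ (exp_pos _), ← div_eq_mul_inv, le_div_iff₀ (by linarith)]
  exact hs_exp

section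

variable {α a : ℝ}

lemma heatingProfile_le (hα : 0 < α) (ha : a ∈ Ioo 0 π) :
    heatingProfile α a ≤ 8 * (1 + 4 / α)⁻¹ := by
  have htan : sin (a / 2) ^ 2 ≤ a / 2 * tan (a / 2) :=
    sin_sq_le_mul_tan (by linarith [ha.1]) (by linarith [ha.2])
  have hexponent : -(2 * a / α) * tan (a / 2) ≤ -(4 / α * sin (a / 2) ^ 2) :=
    calc
      -(2 * a / α) * tan (a / 2) = -(4 / α * (a / 2 * tan (a / 2))) := by ring
      _ ≤ -(4 / α * sin (a / 2) ^ 2) := by gcongr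
  calc
    heatingProfile α a = 8 * (exp (-(2 * a / α) * tan (a / 2)) * sin (a / 2) ^ 2) :=
      mul_assoc _ _ _
    _ ≤ 8 * (exp (-(4 / α * sin (a / 2) ^ 2)) * sin (a / 2) ^ 2) := by gcongr
    _ ≤ 8 * (1 + 4 / α)⁻¹ := by
      gcongr
      exact exp_neg_mul_mul_le_inv (neg_one_lt_zero.trans (by positivity)) (sin_sq_le_one _)

lemma LambdaCrit_le (hα : 0 < α) : LambdaCrit α ≤ 8 * (1 + 4 / α)⁻¹ :=
  csSup_le ((nonempty_Ioo.2 pi_pos).image _) (forall_mem_image.2 fun _ ↦ heatingProfile_le hα)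

lemma LambdaCrit_lt_eight (hα : 0 < α) : LambdaCrit α < 8 := by
  have hinv : (1 + 4 / α)⁻¹ < 1 := inv_lt_one_of_one_lt₀ (lt_add_of_pos_right 1 (by positivity))
  linarith [LambdaCrit_le hα]

lemma heatingProfile_le_LambdaCrit (hα : 0 < α) (ha : a ∈ Ioo 0 π) :
    heatingProfile α a ≤ LambdaCrit α :=
  le_csSup ⟨_, forall_mem_image.2 fun _ ↦ heatingProfile_le hα⟩ (mem_image_of_mem _ ha)

end

lemma tendsto_heatingProfile_atTop (a : ℝ) :
    Tendsto (heatingProfile · a) atTop (𝓝 (8 * sin (a / 2) ^ 2)) := by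
  have hdiv : Tendsto (fun α ↦ 2 * a / α) atTop (𝓝 0) := tendsto_const_nhds.div_atTop tendsto_id
  simpa [heatingProfile] using
    ((hdiv.neg.mul_const (tan (a / 2))).rexp.const_mul 8).mul_const (sin (a / 2) ^ 2)

lemma exists_lt_eight_mul_sin_half_sq {b : ℝ} (hb : b < 8) :
    ∃ a ∈ Ioo 0 π, b < 8 * sin (a / 2) ^ 2 := by
  have hcont : Continuous fun a : ℝ ↦ 8 * sin (a / 2) ^ 2 := by fun_prop
  have hnear : ∀ᶠ a in 𝓝[<] π, b < 8 * sin (a / 2) ^ 2 :=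
    nhdsWithin_le_nhds (hcont.continuousAt.eventually_const_lt (by simpa using hb))
  have hmem : ∀ᶠ a in 𝓝[<] π, a ∈ Ioo 0 π := Ioo_mem_nhdsLT pi_pos
  exact (hmem.and hnear).exists

lemma eventually_lt_LambdaCrit {b : ℝ} (hb : b < 8) : ∀ᶠ α in atTop, b < LambdaCrit α := by
  obtain ⟨a, ha, hab⟩ := exists_lt_eight_mul_sin_half_sq hb
  filter_upwards [(tendsto_heatingProfile_atTop a).eventually_const_lt hab, eventually_gt_atTop 0]
    with α hbα hα
  exact hbα.trans_le (heatingProfile_le_LambdaCrit hα ha)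

/-- Λ_c(α) < 8 for every α > 0, and Λ_c(α) → 8 as α → ∞. -/
theorem LambdaCrit_large_alpha :
    (∀ α : ℝ, 0 < α → LambdaCrit α < 8) ∧
    Filter.Tendsto LambdaCrit Filter.atTop (nhds 8) := by
  refine ⟨fun _ ↦ LambdaCrit_lt_eight,
    tendsto_order.2 ⟨fun _ ↦ eventually_lt_LambdaCrit, fun b hb ↦ ?_⟩⟩
  filter_upwards [eventually_gt_atTop 0] with α hα
  exact (LambdaCrit_lt_eight hα).trans hb
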